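/- For every positive integer N there exists a connected triangle-free 4-regular graph G of order n ≥ N such that ι(G) ≥ 3n/14. -/

import Mathlib

open Classical

/-- The closed neighborhood `N[D]` of a set `D` of vertices. -/
def closedNbhd {V : Type*} (G : SimpleGraph V) (D : Set V) : Set V :=
  {v | v ∈ D ∨ ∃ u ∈ D, G.Adj u v}

/-- `S` is an isolating set of `G`: deleting `N[S]` leaves no edge. -/
def IsIsolatingSet {V : Type*} (G : SimpleGraph V) (S : Set V) : Prop :=
  ∀ u v : V, G.Adj u v → u ∈ closedNbhd G S ∨ v ∈ closedNbhd G S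

/-- The isolation number: the minimum cardinality of an isolating set. -/
noncomputable def isolationNumber {V : Type*} [Fintype V] (G : SimpleGraph V) : ℕ :=
  sInf {k | ∃ S : Set V, IsIsolatingSet G S ∧ S.ncard = k}

/-! Hang on each vertex of a long even cycle a copy of a 14-vertex gadget, a connected triangle-free
graph in which the attached vertex, the root, has degree 2 and all other vertices have degree 4. A
copy touches the rest of the graph only through its root, so the trace of an isolating set on a copy
must dominate an endpoint of every edge of the copy that misses the root. In the gadget no two
vertices achieve this, so every isolating set has at least 3 vertices in each 14-vertex copy. -/

theorem ncard_neighborSet_eq_degree {V : Type*} (G : SimpleGraph V) (v : V)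
    [Fintype (G.neighborSet v)] : (G.neighborSet v).ncard = G.degree v := by
  rw [← Nat.card_coe_set_eq, Nat.card_eq_fintype_card, SimpleGraph.card_neighborSet_eq_degree]

section Isolation

variable {V W : Type*} {G : SimpleGraph V} {H : SimpleGraph W}

/-- `S` isolates `G` up to the edges at `r`: it dominates an endpoint of every other edge. An
isolating set of a rooted product leaves such a trace on each copy of the rooted graph, whose root
may be dominated from outside. The vertex `r` itself may belong to `S`. -/
def IsolatesAwayFrom (G : SimpleGraph V) (r : V) (S : Set V) : Prop :=
  ∀ u v : V, G.Adj u v → u ≠ r → v ≠ r → u ∈ closedNbhd G S ∨ v ∈ closedNbhd G S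

theorem closedNbhd_mono {S T : Set V} (hST : S ⊆ T) : closedNbhd G S ⊆ closedNbhd G T :=
  fun _ hv ↦ hv.imp (fun h ↦ hST h) fun ⟨u, hu, huv⟩ ↦ ⟨u, hST hu, huv⟩

theorem IsolatesAwayFrom.mono {r : V} {S T : Set V} (hS : IsolatesAwayFrom G r S) (hST : S ⊆ T) :
    IsolatesAwayFrom G r T :=
  fun u v huv hu hv ↦
    (hS u v huv hu hv).imp (fun h ↦ closedNbhd_mono hST h) fun h ↦ closedNbhd_mono hST h

theorem isIsolatingSet_univ (G : SimpleGraph V) : IsIsolatingSet G Set.univ :=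
  fun u _ _ ↦ Or.inl (Or.inl (Set.mem_univ u))

theorem le_isolationNumber_iff [Fintype V] {k : ℕ} :
    k ≤ isolationNumber G ↔ ∀ S, IsIsolatingSet G S → k ≤ S.ncard := by
  have hne : {k | ∃ S : Set V, IsIsolatingSet G S ∧ S.ncard = k}.Nonempty :=
    ⟨_, Set.univ, isIsolatingSet_univ G, rfl⟩
  rw [isolationNumber, le_csInf_iff (OrderBot.bddBelow _) hne]
  exact ⟨fun h S hS ↦ h _ ⟨S, hS, rfl⟩, fun h _ ⟨S, hS, hk⟩ ↦ hk ▸ h S hS⟩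

theorem image_closedNbhd (e : G ≃g H) (S : Set V) :
    e '' closedNbhd G S = closedNbhd H (e '' S) := by
  ext w
  obtain ⟨v, rfl⟩ := e.surjective w
  simp [closedNbhd, e.map_adj_iff]

theorem IsIsolatingSet.image {S : Set V} (hS : IsIsolatingSet G S) (e : G ≃g H) :
    IsIsolatingSet H (e '' S) := by
  intro u v huv
  obtain ⟨u, rfl⟩ := e.surjective u
  obtain ⟨v, rfl⟩ := e.surjective v
  simpa only [← image_closedNbhd, e.injective.mem_set_image] using hS u v (e.map_adj_iff.1 huv)

theorem isolationNumber_congr [Fintype V] [Fintype W] (e : G ≃g H) :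
    isolationNumber G = isolationNumber H := by
  refine eq_of_forall_le_iff fun k ↦ ?_
  rw [le_isolationNumber_iff, le_isolationNumber_iff]
  refine ⟨fun h S hS ↦ ?_, fun h S hS ↦ ?_⟩
  · simpa only [Set.ncard_image_of_injective _ e.symm.injective] using h _ (hS.image e.symm)
  · simpa only [Set.ncard_image_of_injective _ e.injective] using h _ (hS.image e)

end Isolation

section RootedProduct

variable {ι W : Type*} {G : SimpleGraph ι} {H : SimpleGraph W} {r : W}

/-- The rooted product of `G` and `(H, r)`: a copy of `H` for every vertex of `G`, with the
copies of the root `r` joined to each other as in `G`. -/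
def rootedProduct (G : SimpleGraph ι) (H : SimpleGraph W) (r : W) : SimpleGraph (ι × W) where
  Adj p q := (p.1 = q.1 ∧ H.Adj p.2 q.2) ∨ (p.2 = r ∧ q.2 = r ∧ G.Adj p.1 q.1)
  symm := ⟨fun _ _ ↦ Or.imp (fun ⟨h, hadj⟩ ↦ ⟨h.symm, hadj.symm⟩)
    fun ⟨hp, hq, hadj⟩ ↦ ⟨hq, hp, hadj.symm⟩⟩
  loopless := ⟨fun _ ↦ Or.rec (fun h ↦ H.irrefl h.2) fun h ↦ G.irrefl h.2.2⟩

theorem rootedProduct_adj {p q : ι × W} : (rootedProduct G H r).Adj p q ↔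
    (p.1 = q.1 ∧ H.Adj p.2 q.2) ∨ (p.2 = r ∧ q.2 = r ∧ G.Adj p.1 q.1) :=
  Iff.rfl

theorem connected_rootedProduct (hG : G.Connected) (hH : H.Connected) :
    (rootedProduct G H r).Connected := by
  let copy (i : ι) : H →g rootedProduct G H r := ⟨Prod.mk i, fun h ↦ Or.inl ⟨rfl, h⟩⟩
  let roots : G →g rootedProduct G H r := ⟨(·, r), fun h ↦ Or.inr ⟨rfl, rfl, h⟩⟩
  have := hG.nonempty
  have := hH.nonempty
  refine ⟨fun ⟨i, u⟩ ⟨j, v⟩ ↦ ?_⟩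
  have to_root : (rootedProduct G H r).Reachable (i, u) (i, r) := (hH u r).map (copy i)
  have between_roots : (rootedProduct G H r).Reachable (i, r) (j, r) := (hG i j).map roots
  have from_root : (rootedProduct G H r).Reachable (j, r) (j, v) := (hH r v).map (copy j)
  exact (to_root.trans between_roots).trans from_root

theorem cliqueFree_rootedProduct {n : ℕ} (hG : G.CliqueFree n) (hH : H.CliqueFree n) :
    (rootedProduct G H r).CliqueFree n := by
  rintro s ⟨hclique, hcard⟩
  by_cases hcopy : ∀ p ∈ s, ∀ q ∈ s, p.1 = q.1
  · have hinj : Set.InjOn Prod.snd (s : Set (ι × W)) :=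
      fun p hp q hq h ↦ Prod.ext (hcopy p hp q hq) h
    refine hH (s.image Prod.snd) ⟨?_, by rw [Finset.card_image_of_injOn hinj, hcard]⟩
    rw [Finset.coe_image]
    rintro _ ⟨p, hp, rfl⟩ _ ⟨q, hq, rfl⟩ hne
    obtain ⟨-, hadj⟩ | ⟨hpr, hqr, -⟩ := hclique hp hq (ne_of_apply_ne Prod.snd hne)
    · exact hadj
    · exact absurd (hpr.trans hqr.symm) hne
  · push Not at hcopy
    obtain ⟨a, ha, b, hb, hab⟩ := hcopy
    have eq_root_of_fst_ne : ∀ p ∈ s, ∀ q ∈ s, p.1 ≠ q.1 → p.2 = r := fun p hp q hq hpq ↦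
      ((hclique hp hq (ne_of_apply_ne Prod.fst hpq)).resolve_left fun h ↦ hpq h.1).1
    have eq_root : ∀ p ∈ s, p.2 = r := fun p hp ↦
      (eq_or_ne p.1 a.1).elim (fun h ↦ eq_root_of_fst_ne p hp b hb (h ▸ hab))
        (eq_root_of_fst_ne p hp a ha)
    have hinj : Set.InjOn Prod.fst (s : Set (ι × W)) :=
      fun p hp q hq h ↦ Prod.ext h ((eq_root p hp).trans (eq_root q hq).symm)
    refine hG (s.image Prod.fst) ⟨?_, by rw [Finset.card_image_of_injOn hinj, hcard]⟩
    rw [Finset.coe_image]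
    rintro _ ⟨p, hp, rfl⟩ _ ⟨q, hq, rfl⟩ hne
    exact ((hclique hp hq (ne_of_apply_ne Prod.fst hne)).resolve_left fun h ↦ hne h.1).2.2

theorem neighborSet_rootedProduct_of_ne {w : W} (hw : w ≠ r) (i : ι) :
    (rootedProduct G H r).neighborSet (i, w) = Prod.mk i '' H.neighborSet w := by
  ext ⟨j, v⟩
  simp only [SimpleGraph.mem_neighborSet, rootedProduct_adj, hw, Set.mem_image, Prod.mk.injEq]
  grind

theorem neighborSet_rootedProduct_root (i : ι) : (rootedProduct G H r).neighborSet (i, r) =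
    Prod.mk i '' H.neighborSet r ∪ (·, r) '' G.neighborSet i := by
  ext ⟨j, v⟩
  simp only [SimpleGraph.mem_neighborSet, rootedProduct_adj, Set.mem_union, Set.mem_image,
    Prod.mk.injEq]
  grind

theorem ncard_neighborSet_rootedProduct_of_ne {w : W} (hw : w ≠ r) (i : ι) :
    ((rootedProduct G H r).neighborSet (i, w)).ncard = (H.neighborSet w).ncard := by
  rw [neighborSet_rootedProduct_of_ne hw,
    Set.ncard_image_of_injective _ (Prod.mk_right_injective i)]

theorem ncard_neighborSet_rootedProduct_root [Finite ι] [Finite W] (i : ι) :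
    ((rootedProduct G H r).neighborSet (i, r)).ncard =
      (H.neighborSet r).ncard + (G.neighborSet i).ncard := by
  have hdisj : Disjoint (Prod.mk i '' H.neighborSet r) ((·, r) '' G.neighborSet i) := by
    rw [Set.disjoint_left]
    rintro _ ⟨w, hw, rfl⟩ ⟨j, -, hj⟩
    exact H.ne_of_adj hw (congrArg Prod.snd hj)
  rw [neighborSet_rootedProduct_root, Set.ncard_union_eq hdisj,
    Set.ncard_image_of_injective _ (Prod.mk_right_injective i),
    Set.ncard_image_of_injective _ (Prod.mk_left_injective r)]

theorem mem_closedNbhd_of_mem_closedNbhd_rootedProduct {S : Set (ι × W)} {i : ι} {w : W}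
    (hw : w ≠ r) (h : (i, w) ∈ closedNbhd (rootedProduct G H r) S) :
    w ∈ closedNbhd H (Prod.mk i ⁻¹' S) := by
  obtain hS | ⟨⟨j, u⟩, hS, ⟨rfl, hadj⟩ | ⟨-, hwr, -⟩⟩ := h
  · exact Or.inl hS
  · exact Or.inr ⟨u, hS, hadj⟩
  · exact absurd hwr hw

theorem IsIsolatingSet.isolatesAwayFrom_fiber {S : Set (ι × W)}
    (hS : IsIsolatingSet (rootedProduct G H r) S) (i : ι) :
    IsolatesAwayFrom H r (Prod.mk i ⁻¹' S) :=
  fun u v huv hu hv ↦ (hS (i, u) (i, v) (Or.inl ⟨rfl, huv⟩)).imp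
    (mem_closedNbhd_of_mem_closedNbhd_rootedProduct hu)
    (mem_closedNbhd_of_mem_closedNbhd_rootedProduct hv)

theorem ncard_eq_sum_ncard_fiber [Fintype ι] [Finite W] (S : Set (ι × W)) :
    S.ncard = ∑ i, (Prod.mk i ⁻¹' S).ncard := by
  let e : S ≃ Σ i, (Prod.mk i ⁻¹' S : Set W) :=
    { toFun := fun p ↦ ⟨p.1.1, p.1.2, p.2⟩
      invFun := fun p ↦ ⟨(p.1, p.2.1), p.2.2⟩ }
  simp only [← Nat.card_coe_set_eq, Nat.card_congr e, Nat.card_sigma]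

theorem card_mul_le_isolationNumber_rootedProduct [Fintype ι] [Fintype W] {k : ℕ}
    (hk : ∀ T, IsolatesAwayFrom H r T → k ≤ T.ncard) :
    Fintype.card ι * k ≤ isolationNumber (rootedProduct G H r) := by
  refine le_isolationNumber_iff.2 fun S hS ↦ ?_
  calc
    Fintype.card ι * k = ∑ _i : ι, k := by simp
    _ ≤ ∑ i, (Prod.mk i ⁻¹' S).ncard :=
      Finset.sum_le_sum fun i _ ↦ hk _ (hS.isolatesAwayFrom_fiber i)
    _ = S.ncard := (ncard_eq_sum_ncard_fiber S).symm

end RootedProduct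

section Gadget

/-- The gadget attached to every vertex of the cycle: the circulant graph on `ℤ/13` with connection
set `{±1, ±5}`, one of whose edges is subdivided by the root `0`. The vertices `1, …, 13` are those
of the circulant graph; subdividing turns its 13-cycle of `±1`-edges into the 14-cycle. -/
def gadget : SimpleGraph (Fin 14) :=
  SimpleGraph.cycleGraph 14 ⊔ (SimpleGraph.circulantGraph {(5 : Fin 13)}).map (Fin.succEmb 13)

instance : DecidableRel gadget.Adj :=
  inferInstanceAs (DecidableRel (_ ⊔ _ : SimpleGraph (Fin 14)).Adj)

theorem gadget_connected : gadget.Connected :=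
  SimpleGraph.cycleGraph_connected.mono le_sup_left

theorem gadget_cliqueFree : gadget.CliqueFree 3 := by
  have no_triangle : ∀ a b, gadget.Adj a b → ∀ c, gadget.Adj a c → ¬ gadget.Adj b c := by
    decide +kernel
  intro s hs
  obtain ⟨a, b, c, hab, hac, hbc, -⟩ := SimpleGraph.is3Clique_iff.1 hs
  exact no_triangle a b hab c hac hbc

theorem gadget_degree : ∀ v, gadget.degree v = if v = 0 then 2 else 4 := by
  decide +kernel

theorem gadget_exists_undominated_adj : ∀ x y, ∃ u v, gadget.Adj u v ∧ u ≠ 0 ∧ v ≠ 0 ∧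
    (u ≠ x ∧ u ≠ y ∧ ¬ gadget.Adj x u ∧ ¬ gadget.Adj y u) ∧
    (v ≠ x ∧ v ≠ y ∧ ¬ gadget.Adj x v ∧ ¬ gadget.Adj y v) := by
  decide +kernel

theorem gadget_not_isolatesAwayFrom_pair (x y : Fin 14) : ¬ IsolatesAwayFrom gadget 0 {x, y} := by
  obtain ⟨u, v, huv, hu, hv, hu_undominated, hv_undominated⟩ := gadget_exists_undominated_adj x y
  have hu_notMem : u ∉ closedNbhd gadget {x, y} := by simp [closedNbhd, hu_undominated]
  have hv_notMem : v ∉ closedNbhd gadget {x, y} := by simp [closedNbhd, hv_undominated]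
  exact fun h ↦ (h u v huv hu hv).elim hu_notMem hv_notMem

theorem three_le_ncard_of_isolatesAwayFrom_gadget {T : Set (Fin 14)}
    (hT : IsolatesAwayFrom gadget 0 T) : 3 ≤ T.ncard := by
  by_contra! hlt
  obtain ⟨P, hTP, -, hP⟩ := Set.exists_subsuperset_card_eq (Set.subset_univ T)
    (Nat.le_of_lt_succ hlt) (by simp [Set.ncard_univ])
  obtain ⟨x, y, -, rfl⟩ := Set.ncard_eq_two.1 hP
  exact gadget_not_isolatesAwayFrom_pair x y (hT.mono hTP)

end Gadget

section Necklace

/-- The rooted product of the cycle of length `m` and the gadget: `m` copies of the gadget with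
their roots joined in a cycle. -/
def necklace (m : ℕ) : SimpleGraph (Fin m × Fin 14) :=
  rootedProduct (SimpleGraph.cycleGraph m) gadget 0

theorem necklace_connected (m : ℕ) : (necklace (m + 1)).Connected :=
  connected_rootedProduct SimpleGraph.cycleGraph_connected gadget_connected

theorem necklace_cliqueFree {m : ℕ} (hm : Even m) : (necklace m).CliqueFree 3 :=
  have hcycle : (SimpleGraph.cycleGraph m).Colorable 2 :=
    (SimpleGraph.cycleGraph.bicoloring_of_even m hm).colorable
  cliqueFree_rootedProduct (hcycle.cliqueFree (by norm_num)) gadget_cliqueFree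

theorem ncard_neighborSet_necklace (m : ℕ) (p : Fin (m + 3) × Fin 14) :
    ((necklace (m + 3)).neighborSet p).ncard = 4 := by
  obtain ⟨i, w⟩ := p
  obtain rfl | hw := eq_or_ne w 0
  · rw [necklace, ncard_neighborSet_rootedProduct_root, ncard_neighborSet_eq_degree,
      ncard_neighborSet_eq_degree, gadget_degree, if_pos rfl,
      SimpleGraph.cycleGraph_degree_three_le]
  · rw [necklace, ncard_neighborSet_rootedProduct_of_ne hw, ncard_neighborSet_eq_degree,
      gadget_degree, if_neg hw]

theorem three_mul_le_isolationNumber_necklace (m : ℕ) : 3 * m ≤ isolationNumber (necklace m) := by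
  simpa only [necklace, Fintype.card_fin, mul_comm] using
    card_mul_le_isolationNumber_rootedProduct (G := SimpleGraph.cycleGraph m)
      fun _ ↦ three_le_ncard_of_isolatesAwayFrom_gadget

end Necklace

/-- There are arbitrarily large connected triangle-free 4-regular graphs with isolation
number at least `3/14` of their order. -/
theorem exists_triangleFree_four_regular_isolation_ge (N : ℕ) (hN : 0 < N) :
    ∃ (n : ℕ) (G : SimpleGraph (Fin n)), N ≤ n ∧ G.Connected ∧ G.CliqueFree 3 ∧
      (∀ v : Fin n, (G.neighborSet v).ncard = 4) ∧
      3 * (n : ℝ) / 14 ≤ (isolationNumber G : ℝ) := by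
  let m := 2 * N + 4
  have hcard : Fintype.card (Fin m × Fin 14) = m * 14 := by simp
  let e : necklace m ≃g (necklace m).overFin hcard := (necklace m).overFinIso hcard
  refine ⟨m * 14, (necklace m).overFin hcard, by omega, ?_, ?_, fun v ↦ ?_, ?_⟩
  · exact e.connected_iff.1 (necklace_connected _)
  · exact (necklace_cliqueFree (by grind)).comap e.symm.isContained
  · rw [← Nat.card_coe_set_eq, Nat.card_congr (e.symm.mapNeighborSet v), Nat.card_coe_set_eq]
    exact ncard_neighborSet_necklace (2 * N + 1) (e.symm v)
  · have hiso : 3 * (m : ℝ) ≤ isolationNumber (necklace m) :=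
      mod_cast three_mul_le_isolationNumber_necklace m
    rw [← isolationNumber_congr e]
    push_cast
    linarith
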